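/- arXiv:2206.02154 — 2 statements merged into one kernel-verified Lean document; each statement's English description precedes it below -/
import Mathlib

section
/- If f and g both belong to the space C_{-1}(0,∞), then their Laplace convolution f * g also belongs to C_{-1}(0,∞). In particular, for any kernel κ ∈ C_{-1}(0,∞), the general fractional integral I_{(κ)} maps the space C_{-1}(0,∞) into itself. -/
open Real Filter MeasureTheory intervalIntegral

/-- The Laplace convolution `(f * g)(t) = ∫_0^t f(t-τ) g(τ) dτ`. -/
noncomputable def lconv (f g : ℝ → ℝ) : ℝ → ℝ :=
  fun t => ∫ τ in (0:ℝ)..t, f (t - τ) * g τ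

/-- The space `C_{-1}(0,∞)`: functions representable as `t^p f₁(t)` with `p > -1`
and `f₁` continuous on `[0,∞)`. -/
def CMinusOne (f : ℝ → ℝ) : Prop :=
  ∃ p : ℝ, p > -1 ∧ ∃ f₁ : ℝ → ℝ, ContinuousOn f₁ (Set.Ici 0) ∧
    ∀ t > (0:ℝ), f t = t ^ p * f₁ t

/-! Substituting `τ = t * s` in the convolution of `t ^ p * f₁ t` and `t ^ q * g₁ t` pulls out the
power `t ^ (p + q + 1)` and leaves the integral of `f₁ (t * (1 - s)) * g₁ (t * s)` over `[0, 1]`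
against the Beta weight `(1 - s) ^ p * s ^ q`. The weight is integrable because `p, q > -1`, and
no longer depends on `t`, so this integral is continuous in `t` up to `t = 0`. Finally
`p + q + 1 > -1`. -/

open Set

section ParametricIntegral

variable {X Y 𝕜 E F G : Type*} [TopologicalSpace X]
  [TopologicalSpace Y] [T2Space Y] [MeasurableSpace Y] [OpensMeasurableSpace Y] {μ : Measure Y}
  [NontriviallyNormedField 𝕜]
  [NormedAddCommGroup E] [NormedSpace ℝ E] [NormedSpace 𝕜 E]
  [NormedAddCommGroup F] [NormedSpace 𝕜 F] [NormedAddCommGroup G] [NormedSpace 𝕜 G]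

theorem continuousOn_setIntegral_bilinear_of_isCompact (L : F →L[𝕜] G →L[𝕜] E)
    {s : Set X} {k : Set Y} {w : Y → F} {h : X → Y → G} (hk : IsCompact k)
    (hw : IntegrableOn w k μ) (hh : ContinuousOn h.uncurry (s ×ˢ k)) :
    ContinuousOn (fun x => ∫ y in k, L (w y) (h x y) ∂μ) s := by
  have : CompactSpace k := isCompact_iff_compactSpace.mp hk
  have hh_subtype : ContinuousOn (Function.uncurry fun x (y : k) => h x y) (s ×ˢ univ) :=
    hh.comp (f := fun z : X × k => (z.1, (z.2 : Y))) (by fun_prop)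
      fun z hz => ⟨hz.1, z.2.2⟩
  have hw_subtype : IntegrableOn (w ∘ Subtype.val) univ (μ.comap ((↑) : k → Y)) :=
    integrableOn_univ.mpr ((integrableOn_iff_comap_subtypeVal hk.measurableSet).mp hw)
  have integral_subtype (x : X) :
      ∫ y in k, L (w y) (h x y) ∂μ = ∫ y : k, L (w y) (h x y) ∂(μ.comap (↑)) :=
    (integral_subtype_comap hk.measurableSet fun y => L (w y) (h x y)).symm
  simp only [integral_subtype]
  exact continuousOn_integral_bilinear_of_locally_integrable_of_compact_support L isCompact_univ
    hh_subtype (fun _ y _ hy => absurd (mem_univ y) hy) hw_subtype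

end ParametricIntegral

theorem intervalIntegrable_one_sub_rpow_mul_rpow {p q : ℝ} (hp : -1 < p) (hq : -1 < q) :
    IntervalIntegrable (fun s : ℝ => (1 - s) ^ p * s ^ q) volume 0 1 := by
  have beta_convergent := (Complex.betaIntegral_convergent (u := (q + 1 : ℝ)) (v := (p + 1 : ℝ))
    (by rw [Complex.ofReal_re]; linarith) (by rw [Complex.ofReal_re]; linarith)).norm
  refine beta_convergent.congr_uIoo fun s hs => ?_
  rw [uIoo_of_le zero_le_one] at hs
  have hs' : 0 < 1 - s := sub_pos.mpr hs.2
  have norm_left : ‖(s : ℂ) ^ (((q + 1 : ℝ) : ℂ) - 1)‖ = s ^ q := by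
    simp [Complex.norm_cpow_eq_rpow_re_of_pos hs.1]
  have norm_right : ‖(1 - (s : ℂ)) ^ (((p + 1 : ℝ) : ℂ) - 1)‖ = (1 - s) ^ p := by
    rw [← Complex.ofReal_one, ← Complex.ofReal_sub, Complex.norm_cpow_eq_rpow_re_of_pos hs']
    simp
  simp only [norm_mul, norm_left, norm_right, mul_comm]

theorem lconv_eq_mul_integral (f g : ℝ → ℝ) (t : ℝ) :
    lconv f g t = t * ∫ s in (0 : ℝ)..1, f (t * (1 - s)) * g (t * s) := by
  simpa [lconv, mul_sub] using
    (mul_integral_comp_mul_left (a := 0) (b := 1) (f := fun τ => f (t - τ) * g τ) t).symm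

/-- The Laplace convolution rescaled to `[0, 1]` and weighted by the (unnormalized) Beta density
with parameters `q + 1` and `p + 1`. For `t > 0`, the Laplace convolution of `t ^ p * f t` and
`t ^ q * g t` is `t ^ (p + q + 1)` times it; hence the indexing by `p` and `q`. -/
noncomputable def betaConv (p q : ℝ) (f g : ℝ → ℝ) : ℝ → ℝ :=
  fun t => ∫ s in (0 : ℝ)..1, ((1 - s) ^ p * s ^ q) * (f (t * (1 - s)) * g (t * s))

theorem lconv_eq_rpow_mul_betaConv {f g f₁ g₁ : ℝ → ℝ} {p q : ℝ}
    (hf : ∀ t > 0, f t = t ^ p * f₁ t) (hg : ∀ t > 0, g t = t ^ q * g₁ t) {t : ℝ} (ht : 0 < t) :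
    lconv f g t = t ^ (p + q + 1) * betaConv p q f₁ g₁ t := by
  have integrand_eq : EqOn (fun s => f (t * (1 - s)) * g (t * s))
      (fun s => t ^ (p + q) * (((1 - s) ^ p * s ^ q) * (f₁ (t * (1 - s)) * g₁ (t * s))))
      (Ioo 0 1) := by
    rintro s ⟨hs₀, hs₁⟩
    have hs₁' : 0 < 1 - s := sub_pos.mpr hs₁
    simp only [hf _ (mul_pos ht hs₁'), hg _ (mul_pos ht hs₀), mul_rpow ht.le hs₁'.le,
      mul_rpow ht.le hs₀.le, rpow_add ht]
    ring
  calc lconv f g t = t * ∫ s in (0 : ℝ)..1, f (t * (1 - s)) * g (t * s) :=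
        lconv_eq_mul_integral f g t
    _ = t * (t ^ (p + q) * betaConv p q f₁ g₁ t) := by
        rw [integral_congr_Ioo_of_le zero_le_one integrand_eq,
          intervalIntegral.integral_const_mul, betaConv]
    _ = t ^ (p + q + 1) * betaConv p q f₁ g₁ t := by
        rw [rpow_add_one ht.ne']
        ring

theorem continuousOn_betaConv {p q : ℝ} {f g : ℝ → ℝ} (hp : -1 < p) (hq : -1 < q)
    (hf : ContinuousOn f (Ici 0)) (hg : ContinuousOn g (Ici 0)) :
    ContinuousOn (betaConv p q f g) (Ici 0) := by
  have weight_integrable : IntegrableOn (fun s : ℝ => (1 - s) ^ p * s ^ q) (Icc 0 1) :=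
    (intervalIntegrable_iff_integrableOn_Icc_of_le zero_le_one).mp
      (intervalIntegrable_one_sub_rpow_mul_rpow hp hq)
  have hfg : ContinuousOn (Function.uncurry fun t s : ℝ => f (t * (1 - s)) * g (t * s))
      (Ici 0 ×ˢ Icc 0 1) :=
    (hf.comp (f := fun z : ℝ × ℝ => z.1 * (1 - z.2)) (by fun_prop)
        fun z hz => mul_nonneg hz.1 (sub_nonneg.mpr hz.2.2)).mul
      (hg.comp (f := fun z : ℝ × ℝ => z.1 * z.2) (by fun_prop)
        fun z hz => mul_nonneg hz.1 hz.2.1)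
  unfold betaConv
  simpa only [integral_of_le zero_le_one, ← integral_Icc_eq_integral_Ioc,
      ContinuousLinearMap.mul_apply'] using
    continuousOn_setIntegral_bilinear_of_isCompact (ContinuousLinearMap.mul ℝ ℝ) isCompact_Icc
      weight_integrable hfg

/-- If `f, g ∈ C_{-1}(0,∞)`, then their Laplace convolution `f * g` also belongs to
`C_{-1}(0,∞)`; in particular, for any kernel `κ ∈ C_{-1}(0,∞)` the GFI `I_{(κ)}`
maps `C_{-1}(0,∞)` into itself. -/
theorem lconv_mem_CMinusOne (f g : ℝ → ℝ) (hf : CMinusOne f) (hg : CMinusOne g) :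
    CMinusOne (lconv f g) := by
  obtain ⟨p, hp, f₁, hf₁, hf⟩ := hf
  obtain ⟨q, hq, g₁, hg₁, hg⟩ := hg
  exact ⟨p + q + 1, by linarith, betaConv p q f₁ g₁, continuousOn_betaConv hp hq hf₁ hg₁,
    fun _ ht => lconv_eq_rpow_mul_betaConv hf hg ht⟩
end

section
/- The ring (C_{-1}(0,∞), +, *) with the usual addition and multiplication given by the Laplace convolution has no divisors of zero: if f, g ∈ C_{-1}(0,∞) and (f * g)(t) = 0 for all t > 0, then f(t) = 0 for all t > 0 or g(t) = 0 for all t > 0. -/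
open Real Filter MeasureTheory intervalIntegral

/-!
If `f * f = 0` on `(0, ∞)`, cut `f` off at `4t` and reflect it to get `G`, vanishing to the right
of `2t` and with `G ⋆ G = 0` on `(0, ∞)`. For `Re z ≥ 0` the square of `∫ exp (z s) G s` is the
exponential integral of `G ⋆ G`, which lives on `(-∞, 0]`, so it is bounded by `(∫ |G|) ^ 2`. Hence
`∫_{s > 0} exp (z s) G s` is a bounded entire function; by Liouville and Riemann–Lebesgue it is
zero, and `G = 0` on `(0, ∞)`, i.e. `f = 0` on `(0, 2t)`.

If `f * g = 0` with `f`, `g` continuous, then, multiplication by the variable being a derivation,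
`f * (s g) = -((s f) * g)`, so that `(f * (s g)) * (f * (s g)) = -(f * g) * ((s g) * (s f)) = 0`
and therefore `f * (s g) = 0`. Iterating, all moments of `s ↦ f (t - s) g s` on `[0, t]` vanish,
so `f (t - s) g s = 0` by Weierstrass approximation. Convolving with `1` reduces locally
integrable functions to continuous ones.
-/

open Set Function ContinuousLinearMap
open scoped Topology Convolution FourierTransform

section LocalIntegrability

lemma locallyIntegrable_indicator_iff {X E : Type*} [TopologicalSpace X] [MeasurableSpace X]
    [NormedAddCommGroup E] {μ : Measure X} {f : X → E} {s : Set X} (hs : MeasurableSet s) :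
    LocallyIntegrable (s.indicator f) μ ↔ LocallyIntegrable f (μ.restrict s) := by
  simp only [LocallyIntegrable, IntegrableAtFilter, IntegrableOn, integrable_indicator_iff hs,
    Measure.restrict_comm hs]

lemma locallyIntegrable_rpow {p : ℝ} (hp : -1 < p) : LocallyIntegrable fun t : ℝ => t ^ p :=
  fun t => ⟨Ioc (t - 1) (t + 1), Ioc_mem_nhds (sub_one_lt t) (lt_add_one t),
    (intervalIntegrable_rpow' hp).1⟩

end LocalIntegrability

section ExponentialTransform

variable {α E : Type*} [MeasurableSpace α] {μ : Measure α} [NormedAddCommGroup E] [NormedSpace ℂ E]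

lemma integrable_cexp_smul {X : α → ℂ} {f : α → E} {C : ℝ} (hX : AEStronglyMeasurable X μ)
    (hf : Integrable f μ) (hC : ∀ᵐ a ∂μ, f a ≠ 0 → (X a).re ≤ C) :
    Integrable (fun a => Complex.exp (X a) • f a) μ := by
  refine (hf.norm.const_mul (rexp C)).mono'
    ((Complex.continuous_exp.comp_aestronglyMeasurable hX).smul hf.1) ?_
  filter_upwards [hC] with a ha
  rcases eq_or_ne (f a) 0 with h0 | h0
  · simp [h0]
  · rw [norm_smul, Complex.norm_exp]
    gcongr
    exact ha h0

lemma differentiable_integral_cexp_mul_smul {X : α → ℂ} {f : α → E} {R : ℝ}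
    (hX : AEStronglyMeasurable X μ) (hf : Integrable f μ) (hR : ∀ᵐ a ∂μ, f a ≠ 0 → ‖X a‖ ≤ R) :
    Differentiable ℂ fun z => ∫ a, Complex.exp (z * X a) • f a ∂μ := by
  intro z₀
  have hmeas (z : ℂ) : AEStronglyMeasurable (fun a => Complex.exp (z * X a)) μ :=
    Complex.continuous_exp.comp_aestronglyMeasurable (hX.const_mul z)
  have hre {z : ℂ} {a : α} (ha : ‖X a‖ ≤ R) : (z * X a).re ≤ ‖z‖ * R :=
    (Complex.re_le_norm _).trans ((norm_mul_le _ _).trans (by gcongr))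
  have hexp {z : ℂ} {a : α} (ha : ‖X a‖ ≤ R) : ‖Complex.exp (z * X a)‖ ≤ rexp (‖z‖ * R) := by
    simpa [Complex.norm_exp] using hre ha
  refine (_root_.hasDerivAt_integral_of_dominated_loc_of_deriv_le (Metric.ball_mem_nhds z₀ one_pos)
    (F' := fun z a => (Complex.exp (z * X a) * X a) • f a)
    (bound := fun a => rexp ((‖z₀‖ + 1) * R) * R * ‖f a‖)
    (.of_forall fun z => (hmeas z).smul hf.1)
    (integrable_cexp_smul (hX.const_mul z₀) hf (hR.mono fun a ha h0 => hre (ha h0)))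
    (((hmeas z₀).mul hX).smul hf.1) ?_
    (hf.norm.const_mul _) ?_).2.differentiableAt
  · filter_upwards [hR] with a ha z hz
    rcases eq_or_ne (f a) 0 with h0 | h0
    · simp [h0]
    · have hz' : ‖z‖ ≤ ‖z₀‖ + 1 := by
        linarith [norm_le_norm_add_norm_sub' z z₀, mem_ball_iff_norm.1 hz]
      have hR0 : 0 ≤ R := (norm_nonneg _).trans (ha h0)
      rw [norm_smul, norm_mul]
      gcongr
      exacts [(hexp (ha h0)).trans (by gcongr), ha h0]
  · refine .of_forall fun a z _ => ?_
    simpa using (((hasDerivAt_id z).mul_const (X a)).cexp).smul_const (f a)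

lemma eq_zero_of_fourier_eq_zero [CompleteSpace E] {f : ℝ → E} (hf : Integrable f)
    (h : 𝓕 f = 0) {t : ℝ} (ht : ContinuousAt f t) : f t = 0 := by
  have hinv := hf.fourierInv_fourier_eq (h ▸ integrable_zero ℝ E volume) ht
  simpa [h, Real.fourierInv_eq] using hinv.symm

lemma fourier_eq_zero_of_norm_integral_cexp_mul_smul_le {f : ℝ → E} {b C : ℝ} (hf : Integrable f)
    (hsupp : support f ⊆ Icc 0 b)
    (hC : ∀ z : ℂ, 0 ≤ z.re → ‖∫ t : ℝ, Complex.exp (z * t) • f t‖ ≤ C) : 𝓕 f = 0 := by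
  set φ : ℂ → E := fun z => ∫ t : ℝ, Complex.exp (z * t) • f t
  have hdiff : Differentiable ℂ φ :=
    differentiable_integral_cexp_mul_smul (R := b) (by fun_prop) hf <| .of_forall fun t ht => by
      obtain ⟨h0, hb⟩ := hsupp ht
      simpa [abs_of_nonneg h0]
  have hbdd : Bornology.IsBounded (range φ) := by
    refine isBounded_iff_forall_norm_le.2 ⟨max C (∫ t, ‖f t‖), forall_mem_range.2 fun z => ?_⟩
    rcases le_total 0 z.re with hz | hz
    · exact (hC z hz).trans (le_max_left _ _)
    · refine le_trans (norm_integral_le_of_norm_le hf.norm (.of_forall fun t => ?_))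
        (le_max_right _ _)
      rcases eq_or_ne (f t) 0 with h0 | h0
      · simp [h0]
      · rw [norm_smul, Complex.norm_exp]
        refine mul_le_of_le_one_left (norm_nonneg _) (Real.exp_le_one_iff.2 ?_)
        simpa using mul_nonpos_of_nonpos_of_nonneg hz (hsupp h0).1
  have hfourier (ξ : ℝ) : 𝓕 f ξ = φ 0 := by
    rw [← hdiff.apply_eq_apply_of_bounded hbdd (-2 * π * ξ * Complex.I),
      Real.fourier_real_eq_integral_exp_smul]
    refine integral_congr_ae (.of_forall fun t => ?_)
    push_cast
    ring_nf
  have hconst : 𝓕 f = fun _ => φ 0 := funext hfourier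
  have hlim : Tendsto (fun _ : ℝ => φ 0) (cocompact ℝ) (𝓝 0) :=
    hconst ▸ Real.zero_at_infty_fourier f
  rw [hconst, tendsto_nhds_unique tendsto_const_nhds hlim]
  rfl

end ExponentialTransform

section Convolution

lemma convolution_mul_assoc_of_bounded {𝕜 G : Type*} [RCLike 𝕜] [MeasurableSpace G] [AddGroup G]
    [MeasurableAdd₂ G] [MeasurableNeg G] {μ : Measure G} [SFinite μ] [μ.IsAddLeftInvariant]
    [μ.IsAddRightInvariant] [μ.IsNegInvariant] {f g h : G → 𝕜} {C : ℝ} (hf : Integrable f μ)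
    (hC : ∀ x, ‖f x‖ ≤ C) (hg : Integrable g μ) (hh : Integrable h μ) :
    (f ⋆[mul 𝕜 𝕜, μ] g) ⋆[mul 𝕜 𝕜, μ] h = f ⋆[mul 𝕜 𝕜, μ] (g ⋆[mul 𝕜 𝕜, μ] h) := by
  ext x
  refine convolution_assoc _ _ _ _ (fun _ _ _ => mul_assoc _ _ _) hf.1 hg.1 hh.1
    (hf.ae_convolution_exists _ hg) (hg.norm.ae_convolution_exists _ hh.norm) ?_
  exact ((hg.norm.integrable_convolution (mul ℝ ℝ) hh.norm).comp_sub_left x).bdd_mul hf.norm.1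
    (.of_forall fun y => (norm_norm (f y)).trans_le (hC y))

lemma norm_convolution_mul_le {𝕜 G : Type*} [NontriviallyNormedField 𝕜] [NormedSpace ℝ 𝕜]
    [MeasurableSpace G] [Sub G] {μ : Measure G} (f g : G → 𝕜) (x : G) :
    ‖(f ⋆[mul 𝕜 𝕜, μ] g) x‖ ≤ ((fun y => ‖f y‖) ⋆[mul ℝ ℝ, μ] fun y => ‖g y‖) x :=
  (MeasureTheory.norm_integral_le_integral_norm _).trans_eq (by simp [convolution_def])

lemma convolution_mul_ofReal (𝕜 : Type*) {G : Type*} [RCLike 𝕜] [MeasurableSpace G] [Sub G]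
    {μ : Measure G} (f g : G → ℝ) (x : G) :
    ((fun y => (f y : 𝕜)) ⋆[mul 𝕜 𝕜, μ] fun y => (g y : 𝕜)) x = ((f ⋆[mul ℝ ℝ, μ] g) x : ℝ) := by
  rw [convolution_mul, convolution_mul, ← _root_.integral_ofReal]
  simp

lemma convolution_comp_const_sub {𝕜 G E E' F : Type*} [NontriviallyNormedField 𝕜]
    [NormedAddCommGroup E] [NormedSpace 𝕜 E] [NormedAddCommGroup E'] [NormedSpace 𝕜 E']
    [NormedAddCommGroup F] [NormedSpace 𝕜 F] [NormedSpace ℝ F] [MeasurableSpace G] [AddCommGroup G]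
    [MeasurableAdd G] [MeasurableNeg G] {μ : Measure G} [μ.IsAddLeftInvariant] [μ.IsNegInvariant]
    (L : E →L[𝕜] E' →L[𝕜] F) (f : G → E) (g : G → E') (a b x : G) :
    ((fun y => f (a - y)) ⋆[L, μ] fun y => g (b - y)) x = (f ⋆[L, μ] g) (a + b - x) := by
  rw [convolution_def, convolution_def, ← integral_sub_left_eq_self _ μ a]
  refine integral_congr_ae (.of_forall fun y => ?_)
  simp only [sub_sub_cancel]
  congr 2
  abel

lemma convolution_cexp_mul (f g : ℝ → ℂ) (z : ℂ) (t : ℝ) :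
    ((fun s : ℝ => Complex.exp (z * s) * f s) ⋆[mul ℂ ℂ] fun s : ℝ => Complex.exp (z * s) * g s) t =
      Complex.exp (z * t) * (f ⋆[mul ℂ ℂ] g) t := by
  rw [convolution_mul, convolution_mul, ← MeasureTheory.integral_const_mul]
  refine integral_congr_ae (.of_forall fun s => ?_)
  have hexp : Complex.exp (z * t) = Complex.exp (z * s) * Complex.exp (z * (t - s : ℝ)) := by
    rw [← Complex.exp_add]
    push_cast
    ring_nf
  simp only [hexp]
  ring

end Convolution

section ConvolutionSquare

lemma integrable_cexp_mul_of_support_subset_Iic {G : ℝ → ℂ} {b : ℝ} (hG : Integrable G)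
    (hb : support G ⊆ Iic b) {z : ℂ} (hz : 0 ≤ z.re) :
    Integrable fun t : ℝ => Complex.exp (z * t) * G t :=
  integrable_cexp_smul (C := z.re * b) (by fun_prop) hG <| .of_forall fun t ht => by
    simpa using mul_le_mul_of_nonneg_left (hb ht) hz

lemma norm_cexp_mul_mul_le {z w : ℂ} (hz : 0 ≤ z.re) {t : ℝ} (ht : t ≤ 0) :
    ‖Complex.exp (z * t) * w‖ ≤ ‖w‖ := by
  rw [norm_mul, Complex.norm_exp]
  refine mul_le_of_le_one_left (norm_nonneg _) (Real.exp_le_one_iff.2 ?_)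
  simpa using mul_nonpos_of_nonneg_of_nonpos hz ht

lemma norm_integral_cexp_mul_le_of_convolution_self {G : ℝ → ℂ} {b : ℝ} (hG : Integrable G)
    (hb : support G ⊆ Iic b) (h : ∀ t > 0, (G ⋆[mul ℂ ℂ] G) t = 0) {z : ℂ} (hz : 0 ≤ z.re) :
    ‖∫ t : ℝ, Complex.exp (z * t) * G t‖ ≤ ∫ t, ‖G t‖ := by
  set H : ℝ → ℂ := fun t => Complex.exp (z * t) * G t with hH
  have hHint : Integrable H := integrable_cexp_mul_of_support_subset_Iic hG hb hz
  have hbound (t : ℝ) :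
      ‖(H ⋆[mul ℂ ℂ] H) t‖ ≤ ((fun s => ‖G s‖) ⋆[mul ℝ ℝ] fun s => ‖G s‖) t := by
    refine le_trans ?_ (norm_convolution_mul_le G G t)
    rw [hH, convolution_cexp_mul]
    rcases le_or_gt t 0 with ht | ht
    · exact norm_cexp_mul_mul_le hz ht
    · simp [h t ht]
  refine (sq_le_sq₀ (norm_nonneg _) (integral_nonneg fun _ => norm_nonneg _)).1 ?_
  calc ‖∫ t, H t‖ ^ 2 = ‖∫ t, (H ⋆[mul ℂ ℂ] H) t‖ := by
        rw [integral_convolution _ hHint hHint, mul_apply', norm_mul, sq]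
    _ ≤ ∫ t, ((fun s => ‖G s‖) ⋆[mul ℝ ℝ] fun s => ‖G s‖) t :=
        norm_integral_le_of_norm_le (hG.norm.integrable_convolution _ hG.norm) (.of_forall hbound)
    _ = (∫ t, ‖G t‖) ^ 2 := by
        rw [integral_convolution _ hG.norm hG.norm, mul_apply', sq]

lemma eq_zero_of_convolution_self_eq_zero {G : ℝ → ℂ} {b : ℝ} (hG : Integrable G)
    (hb : support G ⊆ Iic b) (h : ∀ t > 0, (G ⋆[mul ℂ ℂ] G) t = 0) {t : ℝ} (ht : 0 < t)
    (hGt : ContinuousAt G t) : G t = 0 := by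
  have hpos : (Ioi 0).indicator G =ᶠ[𝓝 t] G :=
    eventuallyEq_of_mem (Ioi_mem_nhds ht) (eqOn_indicator (s := Ioi 0) (f := G))
  have hfourier : 𝓕 ((Ioi 0).indicator G) = 0 := by
    refine fourier_eq_zero_of_norm_integral_cexp_mul_smul_le (b := b) (C := 2 * ∫ t, ‖G t‖)
      (hG.indicator measurableSet_Ioi) ?_ fun z hz => ?_
    · rw [support_indicator]
      exact fun s hs => ⟨hs.1.le, hb hs.2⟩
    have hH := integrable_cexp_mul_of_support_subset_Iic hG hb hz
    have hleft : ‖∫ s : ℝ in Iic 0, Complex.exp (z * s) * G s‖ ≤ ∫ s, ‖G s‖ :=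
      (norm_integral_le_of_norm_le hG.norm.integrableOn
        (ae_restrict_of_forall_mem measurableSet_Iic fun s hs => norm_cexp_mul_mul_le hz hs)).trans
        (setIntegral_le_integral hG.norm (.of_forall fun _ => norm_nonneg _))
    have hright : ∫ s : ℝ, Complex.exp (z * s) • (Ioi 0).indicator G s =
        (∫ s : ℝ, Complex.exp (z * s) * G s) - ∫ s : ℝ in Iic 0, Complex.exp (z * s) * G s := by
      rw [← intervalIntegral.integral_Iic_add_Ioi hH.integrableOn hH.integrableOn (b := 0),
        add_sub_cancel_left, ← MeasureTheory.integral_indicator measurableSet_Ioi]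
      simp only [indicator_mul_right, smul_eq_mul]
    calc ‖∫ s : ℝ, Complex.exp (z * s) • (Ioi 0).indicator G s‖
        ≤ ‖∫ s : ℝ, Complex.exp (z * s) * G s‖ + ‖∫ s : ℝ in Iic 0, Complex.exp (z * s) * G s‖ :=
          hright ▸ norm_sub_le _ _
      _ ≤ 2 * ∫ s, ‖G s‖ := by
          linarith [norm_integral_cexp_mul_le_of_convolution_self hG hb h hz]
  rw [← hpos.eq_of_nhds]
  exact eq_zero_of_fourier_eq_zero (hG.indicator measurableSet_Ioi) hfourier
    (hGt.congr hpos.symm)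

end ConvolutionSquare

section LaplaceConvolution

variable {f f' g g' h k : ℝ → ℝ} {t : ℝ}

lemma lconv_congr (ht : 0 ≤ t) (hf : EqOn f f' (Ioo 0 t)) (hg : EqOn g g' (Ioo 0 t)) :
    lconv f g t = lconv f' g' t := by
  rw [lconv, lconv, integral_of_le ht, integral_of_le ht, integral_Ioc_eq_integral_Ioo,
    integral_Ioc_eq_integral_Ioo]
  refine setIntegral_congr_fun measurableSet_Ioo fun s hs => ?_
  simp only [hf ⟨sub_pos.2 hs.2, sub_lt_self t hs.1⟩, hg hs]

lemma lconv_comm (f g : ℝ → ℝ) : lconv f g = lconv g f := by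
  ext t
  simpa [lconv, mul_comm] using
    (integral_comp_sub_left (fun s => g (t - s) * f s) t (a := 0) (b := t))

lemma lconv_zero_left (g : ℝ → ℝ) : lconv 0 g = 0 := by
  ext t
  simp [lconv]

lemma lconv_neg_right (f g : ℝ → ℝ) : lconv f (-g) = -lconv f g := by
  ext t
  simp [lconv]

lemma continuous_lconv (hf : Continuous f) (hg : Continuous g) : Continuous (lconv f g) :=
  continuous_parametric_intervalIntegral_of_continuous
    (f := fun t τ => f (t - τ) * g τ) (by fun_prop) continuous_id

lemma convolution_eq_indicator_lconv (hf : support f ⊆ Ioi 0) (hg : support g ⊆ Ioi 0) :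
    f ⋆[mul ℝ ℝ] g = (Ioi 0).indicator (lconv f g) := by
  have hpos := posConvolution_eq_convolution_indicator f g (mul ℝ ℝ)
  rw [indicator_eq_self.2 hf, indicator_eq_self.2 hg] at hpos
  rw [← hpos, lconv_comm]
  unfold posConvolution lconv
  simp only [mul_apply', mul_comm]

lemma lconv_eq_convolution_of_eqOn {F G : ℝ → ℝ} (ht : 0 ≤ t) (hF : support F ⊆ Ioi 0)
    (hG : support G ⊆ Ioi 0) (hf : EqOn f F (Ioo 0 t)) (hg : EqOn g G (Ioo 0 t)) :
    lconv f g t = (F ⋆[mul ℝ ℝ] G) t := by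
  rw [lconv_congr ht hf hg, convolution_eq_indicator_lconv hF hG]
  rcases ht.eq_or_lt with rfl | ht
  · simp [lconv]
  · rw [indicator_of_mem (mem_Ioi.2 ht)]

lemma support_indicator_Ioc_subset_Ioi (f : ℝ → ℝ) (t : ℝ) :
    support ((Ioc 0 t).indicator f) ⊆ Ioi 0 :=
  support_indicator_subset.trans Ioc_subset_Ioi_self

lemma lconv_eq_convolution_indicator {T : ℝ} (ht : t ∈ Icc 0 T) :
    lconv f g t = ((Ioc 0 T).indicator f ⋆[mul ℝ ℝ] (Ioc 0 T).indicator g) t := by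
  have hsub : Ioo 0 t ⊆ Ioc 0 T := fun s hs => ⟨hs.1, hs.2.le.trans ht.2⟩
  exact lconv_eq_convolution_of_eqOn ht.1 (support_indicator_Ioc_subset_Ioi f T)
    (support_indicator_Ioc_subset_Ioi g T) (eqOn_indicator.symm.mono hsub)
    (eqOn_indicator.symm.mono hsub)

lemma lconv_assoc (ht : 0 ≤ t) (hf : ContinuousOn f (Icc 0 t)) (hg : IntegrableOn g (Ioc 0 t))
    (hh : IntegrableOn h (Ioc 0 t)) :
    lconv (lconv f g) h t = lconv f (lconv g h) t := by
  obtain ⟨C, hC⟩ := isCompact_Icc.exists_bound_of_continuousOn hf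
  have hfint : IntegrableOn f (Ioc 0 t) := hf.integrableOn_Icc.mono_set Ioc_subset_Icc_self
  have hC0 : 0 ≤ C := (norm_nonneg _).trans (hC 0 ⟨le_rfl, ht⟩)
  have hsupp (u v : ℝ → ℝ) :
      support ((Ioc 0 t).indicator u ⋆[mul ℝ ℝ] (Ioc 0 t).indicator v) ⊆ Ioi 0 := by
    rw [convolution_eq_indicator_lconv (support_indicator_Ioc_subset_Ioi u t)
      (support_indicator_Ioc_subset_Ioi v t)]
    exact support_indicator_subset
  have hlconv (u v : ℝ → ℝ) : EqOn (lconv u v)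
      ((Ioc 0 t).indicator u ⋆[mul ℝ ℝ] (Ioc 0 t).indicator v) (Ioo 0 t) := fun s hs =>
    lconv_eq_convolution_indicator (Ioo_subset_Icc_self hs)
  have hind (u : ℝ → ℝ) : EqOn u ((Ioc 0 t).indicator u) (Ioo 0 t) :=
    eqOn_indicator.symm.mono Ioo_subset_Ioc_self
  have hint {u : ℝ → ℝ} (hu : IntegrableOn u (Ioc 0 t)) : Integrable ((Ioc 0 t).indicator u) :=
    hu.integrable_indicator measurableSet_Ioc
  rw [lconv_eq_convolution_of_eqOn ht (hsupp f g) (support_indicator_Ioc_subset_Ioi h t)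
      (hlconv f g) (hind h),
    lconv_eq_convolution_of_eqOn ht (support_indicator_Ioc_subset_Ioi f t) (hsupp g h)
      (hind f) (hlconv g h),
    convolution_mul_assoc_of_bounded (C := C) (hint hfint) (fun s => ?_)
      (hint hg) (hint hh)]
  by_cases hs : s ∈ Ioc 0 t
  · rw [indicator_of_mem hs]
    exact hC s (Ioc_subset_Icc_self hs)
  · simpa [hs] using hC0

lemma lconv_lconv_lconv_comm (ht : 0 ≤ t) (hf : Continuous f) (hg : Continuous g)
    (hh : Continuous h) (hk : Continuous k) :
    lconv (lconv f g) (lconv h k) t = lconv (lconv f h) (lconv g k) t := by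
  have hmid : EqOn (lconv g (lconv h k)) (lconv h (lconv g k)) (Ioo 0 t) := fun s hs => by
    rw [← lconv_assoc hs.1.le hg.continuousOn hh.integrableOn_Ioc hk.integrableOn_Ioc, lconv_comm g,
      lconv_assoc hs.1.le hh.continuousOn hg.integrableOn_Ioc hk.integrableOn_Ioc]
  rw [lconv_assoc ht hf.continuousOn hg.integrableOn_Ioc (continuous_lconv hh hk).integrableOn_Ioc,
    lconv_congr ht (eqOn_refl f _) hmid,
    lconv_assoc ht hf.continuousOn hh.integrableOn_Ioc (continuous_lconv hg hk).integrableOn_Ioc]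

lemma lconv_id_mul_add_lconv_id_mul (hf : Continuous f) (hg : Continuous g) (t : ℝ) :
    lconv (id * f) g t + lconv f (id * g) t = t * lconv f g t := by
  simp only [lconv]
  rw [← intervalIntegral.integral_add, ← intervalIntegral.integral_const_mul]
  · refine integral_congr fun s _ => ?_
    simp only [Pi.mul_apply, id]
    ring
  all_goals exact Continuous.intervalIntegrable (by fun_prop) _ _

end LaplaceConvolution

section Moments

variable {f : ℝ → ℝ} {a b : ℝ}

lemma integral_polynomial_eval_mul_eq_zero (hf : IntervalIntegrable f volume a b)
    (h : ∀ n : ℕ, ∫ s in a..b, s ^ n * f s = 0) (p : Polynomial ℝ) :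
    ∫ s in a..b, p.eval s * f s = 0 := by
  simp only [Polynomial.eval_eq_sum_range, Finset.sum_mul, mul_assoc]
  rw [intervalIntegral.integral_finsetSum fun i _ =>
    (hf.continuousOn_mul (by fun_prop)).const_mul _]
  simp [h]

lemma eqOn_zero_of_integral_pow_mul_eq_zero (hf : ContinuousOn f (Icc a b))
    (h : ∀ n : ℕ, ∫ s in a..b, s ^ n * f s = 0) : EqOn f 0 (Ioo a b) := by
  intro s hs
  have hab : a < b := hs.1.trans hs.2
  have hint {u : ℝ → ℝ} (hu : ContinuousOn u (Icc a b)) : IntervalIntegrable u volume a b :=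
    hu.intervalIntegrable_of_Icc hab.le
  have hle (ε : ℝ) (hε : 0 < ε) : ∫ s in a..b, f s * f s ≤ ε * ∫ s in a..b, |f s| := by
    obtain ⟨p, hp⟩ := exists_polynomial_near_of_continuousOn a b f hf ε hε
    calc ∫ s in a..b, f s * f s = ∫ s in a..b, (f s - p.eval s) * f s := by
          simp only [sub_mul]
          rw [intervalIntegral.integral_sub (hint (by fun_prop)) (hint (by fun_prop)),
            integral_polynomial_eval_mul_eq_zero (hint hf) h, sub_zero]
      _ ≤ ∫ s in a..b, ε * |f s| := by
          refine integral_mono_on hab.le (hint (by fun_prop)) (hint (by fun_prop)) fun u hu => ?_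
          refine (le_abs_self _).trans ?_
          rw [abs_mul, abs_sub_comm]
          exact mul_le_mul_of_nonneg_right (hp u hu).le (abs_nonneg _)
      _ = ε * ∫ s in a..b, |f s| := intervalIntegral.integral_const_mul _ _
  have hlim : Tendsto (fun ε : ℝ => ε * ∫ s in a..b, |f s|) (𝓝[>] 0) (𝓝 0) :=
    ((continuous_id.mul continuous_const).tendsto' 0 0 (zero_mul _)).mono_left
      nhdsWithin_le_nhds
  have hnonpos : ∫ s in a..b, f s * f s ≤ 0 :=
    ge_of_tendsto hlim (eventually_mem_nhdsWithin.mono hle)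
  by_contra hne
  exact hnonpos.not_gt <| integral_pos hab (by fun_prop) (fun _ _ => mul_self_nonneg _)
    ⟨s, Ioo_subset_Icc_self hs, mul_self_pos.2 hne⟩

end Moments

section Titchmarsh

variable {f g : ℝ → ℝ} {t : ℝ}

lemma eq_zero_of_lconv_self_eq_zero (hf : Continuous f) (h : ∀ t > 0, lconv f f t = 0)
    (ht : 0 < t) : f t = 0 := by
  -- Under `s ↦ 2 * t - s`, vanishing of `F ⋆ F` below `4 * t` becomes vanishing on `(0, ∞)`.
  set F : ℝ → ℝ := (Ioc 0 (4 * t)).indicator f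
  have hFself (s : ℝ) (hs : s < 4 * t) : (F ⋆[mul ℝ ℝ] F) s = 0 := by
    rcases le_or_gt s 0 with hs0 | hs0
    · rw [convolution_eq_indicator_lconv (support_indicator_Ioc_subset_Ioi f _)
        (support_indicator_Ioc_subset_Ioi f _), indicator_of_notMem (notMem_Ioi.2 hs0)]
    · rw [← lconv_eq_convolution_indicator ⟨hs0.le, hs.le⟩, h s hs0]
  have hFint : Integrable F := hf.integrableOn_Ioc.integrable_indicator measurableSet_Ioc
  have hFf : F =ᶠ[𝓝 t] f :=
    eventuallyEq_of_mem (Ioc_mem_nhds ht (by linarith)) eqOn_indicator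
  have hFt : ContinuousAt (fun s => F (2 * t - s)) t := by
    refine ContinuousAt.comp (g := F) ?_ (by fun_prop)
    rw [two_mul, add_sub_cancel_right]
    exact hf.continuousAt.congr hFf.symm
  have hzero := eq_zero_of_convolution_self_eq_zero (G := fun s => (F (2 * t - s) : ℂ))
    (b := 2 * t) (hFint.comp_sub_left _).ofReal ?_ (fun s hs => ?_) ht
    (Complex.continuous_ofReal.continuousAt.comp hFt)
  · rw [two_mul, add_sub_cancel_right, Complex.ofReal_eq_zero] at hzero
    rw [← hFf.eq_of_nhds, hzero]
  · intro s hs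
    have := support_indicator_Ioc_subset_Ioi f (4 * t) (Complex.ofReal_ne_zero.1 hs)
    exact (sub_pos.1 (mem_Ioi.1 this)).le
  · refine (convolution_mul_ofReal ℂ (fun s => F (2 * t - s)) (fun s => F (2 * t - s)) s).trans ?_
    rw [convolution_comp_const_sub, hFself _ (by linarith), RCLike.ofReal_zero]

lemma lconv_id_mul_eq_zero (hf : Continuous f) (hg : Continuous g)
    (h : ∀ t > 0, lconv f g t = 0) (ht : 0 < t) : lconv f (id * g) t = 0 := by
  have hidf : Continuous (id * f) := continuous_id.mul hf
  have hidg : Continuous (id * g) := continuous_id.mul hg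
  have hneg : ∀ s > 0, lconv f (id * g) s = -lconv (id * f) g s := fun s hs => by
    linarith [lconv_id_mul_add_lconv_id_mul hf hg s, mul_eq_zero_of_right s (h s hs)]
  refine eq_zero_of_lconv_self_eq_zero (continuous_lconv hf hidg) (fun s hs => ?_) ht
  calc lconv (lconv f (id * g)) (lconv f (id * g)) s
      = lconv (lconv f (id * g)) (-lconv (id * f) g) s :=
        lconv_congr hs.le (eqOn_refl _ _) fun u hu => hneg u hu.1
    _ = -lconv (lconv f (id * g)) (lconv g (id * f)) s := by
        rw [lconv_neg_right, lconv_comm (id * f), Pi.neg_apply]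
    _ = -lconv (lconv f g) (lconv (id * g) (id * f)) s := by
        rw [lconv_lconv_lconv_comm hs.le hf hidg hg hidf]
    _ = -lconv 0 (lconv (id * g) (id * f)) s := by
        rw [lconv_congr hs.le (fun u hu => h u hu.1) (eqOn_refl _ _)]
        rfl
    _ = 0 := by rw [lconv_zero_left, Pi.zero_apply, neg_zero]

lemma lconv_id_pow_mul_eq_zero (hf : Continuous f) (hg : Continuous g)
    (h : ∀ t > 0, lconv f g t = 0) (n : ℕ) : ∀ t > 0, lconv f (id ^ n * g) t = 0 := by
  induction n with
  | zero => simpa using h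
  | succ n ih =>
    rw [pow_succ', mul_assoc]
    exact fun t => lconv_id_mul_eq_zero hf ((continuous_id.pow n).mul hg) ih

lemma eqOn_zero_or_eqOn_zero_of_lconv_eq_zero (hf : Continuous f) (hg : Continuous g)
    (h : ∀ t > 0, lconv f g t = 0) : EqOn f 0 (Ioi 0) ∨ EqOn g 0 (Ioi 0) := by
  by_contra! hne
  simp only [EqOn, not_forall] at hne
  obtain ⟨⟨a, ha, hfa⟩, b, hb, hgb⟩ := hne
  rw [mem_Ioi] at ha hb
  have hmoment (n : ℕ) : ∫ s in 0..a + b, s ^ n * (f (a + b - s) * g s) = 0 := by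
    simpa only [lconv, Pi.mul_apply, Pi.pow_apply, id, mul_left_comm] using
      lconv_id_pow_mul_eq_zero hf hg h n (a + b) (add_pos ha hb)
  have hzero := eqOn_zero_of_integral_pow_mul_eq_zero (f := fun s => f (a + b - s) * g s)
    (by fun_prop) hmoment ⟨hb, lt_add_of_pos_left b ha⟩
  simp only [add_sub_cancel_right] at hzero
  exact (mul_eq_zero.1 hzero).elim hfa hgb

lemma lconv_one_left (f : ℝ → ℝ) (t : ℝ) : lconv 1 f t = ∫ s in 0..t, f s := by
  simp [lconv]

lemma continuous_lconv_one_left (hf : LocallyIntegrable f) : Continuous (lconv 1 f) := by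
  simp only [funext (lconv_one_left f)]
  exact continuous_primitive (fun a b => intervalIntegrable_iff.2 <|
    (hf.integrableOn_isCompact isCompact_uIcc).mono_set uIoc_subset_uIcc) 0

lemma ae_eq_zero_of_lconv_one_left_eq_zero (hf : LocallyIntegrable f)
    (h : EqOn (lconv 1 f) 0 (Ioi 0)) : f =ᵐ[volume.restrict (Ioi 0)] 0 := by
  refine (ae_restrict_iff' measurableSet_Ioi).2 ?_
  filter_upwards [LocallyIntegrable.ae_hasDerivAt_integral hf] with t hderiv ht
  have hprim : (fun x => ∫ s in 0..x, f s) =ᶠ[𝓝 t] 0 :=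
    eventuallyEq_of_mem (Ioi_mem_nhds ht) fun x hx => (lconv_one_left f x).symm.trans (h hx)
  exact (hderiv 0).unique ((hasDerivAt_const t 0).congr_of_eventuallyEq hprim)

lemma lconv_lconv_one_left_eq_zero (hf : LocallyIntegrable f) (hg : LocallyIntegrable g)
    (h : lconv f g =ᵐ[volume.restrict (Ioi 0)] 0) (ht : 0 ≤ t) :
    lconv (lconv 1 f) g t = 0 := by
  have hint {u : ℝ → ℝ} (hu : LocallyIntegrable u) : IntegrableOn u (Ioc 0 t) :=
    (hu.integrableOn_isCompact isCompact_Icc).mono_set Ioc_subset_Icc_self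
  rw [lconv_assoc ht continuous_one.continuousOn (hint hf) (hint hg), lconv_one_left,
    integral_of_le ht]
  exact integral_eq_zero_of_ae (ae_restrict_of_ae_restrict_of_subset Ioc_subset_Ioi_self h)

lemma ae_eq_zero_or_ae_eq_zero_of_lconv_ae_eq_zero (hf : LocallyIntegrable f)
    (hg : LocallyIntegrable g) (h : lconv f g =ᵐ[volume.restrict (Ioi 0)] 0) :
    f =ᵐ[volume.restrict (Ioi 0)] 0 ∨ g =ᵐ[volume.restrict (Ioi 0)] 0 := by
  have hF := continuous_lconv_one_left hf
  have hG := continuous_lconv_one_left hg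
  have hgF : lconv g (lconv 1 f) =ᵐ[volume.restrict (Ioi 0)] 0 :=
    ae_restrict_of_forall_mem measurableSet_Ioi fun t ht => by
      rw [lconv_comm]
      exact lconv_lconv_one_left_eq_zero hf hg h (mem_Ioi.1 ht).le
  have hGF : ∀ t > 0, lconv (lconv 1 g) (lconv 1 f) t = 0 := fun t ht =>
    lconv_lconv_one_left_eq_zero hg hF.locallyIntegrable hgF ht.le
  exact (eqOn_zero_or_eqOn_zero_of_lconv_eq_zero hG hF hGF).symm.imp
    (ae_eq_zero_of_lconv_one_left_eq_zero hf) (ae_eq_zero_of_lconv_one_left_eq_zero hg)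

end Titchmarsh

namespace CMinusOne

variable {f : ℝ → ℝ}

protected lemma continuousOn (hf : CMinusOne f) : ContinuousOn f (Ioi 0) := by
  obtain ⟨p, -, f₁, hf₁, hp⟩ := hf
  exact ((continuousOn_id.rpow_const fun t ht => .inl (ne_of_gt ht)).mul
    (hf₁.mono Ioi_subset_Ici_self)).congr hp

protected lemma locallyIntegrableOn (hf : CMinusOne f) : LocallyIntegrableOn f (Ici 0) := by
  obtain ⟨p, hp, f₁, hf₁, hfp⟩ := hf
  refine (((locallyIntegrable_rpow hp).locallyIntegrableOn _).mul_continuousOn hf₁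
    isLocallyClosed_Ici).congr ?_
  rw [← restrict_Ioi_eq_restrict_Ici]
  exact ae_restrict_of_forall_mem measurableSet_Ioi fun t ht => (hfp t ht).symm

end CMinusOne

theorem CMinusOne_no_zero_divisors_general (f g : ℝ → ℝ) (hf : LocallyIntegrableOn f (Ici 0))
    (hg : LocallyIntegrableOn g (Ici 0)) (h : lconv f g =ᵐ[volume.restrict (Ioi 0)] 0) :
    f =ᵐ[volume.restrict (Ioi 0)] 0 ∨ g =ᵐ[volume.restrict (Ioi 0)] 0 := by
  have hint {u : ℝ → ℝ} (hu : LocallyIntegrableOn u (Ici 0)) :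
      LocallyIntegrable ((Ici 0).indicator u) :=
    (locallyIntegrable_indicator_iff measurableSet_Ici).2 <|
      (locallyIntegrableOn_iff_locallyIntegrable_restrict isClosed_Ici).1 hu
  have hind (u : ℝ → ℝ) : EqOn ((Ici 0).indicator u) u (Ioi 0) :=
    eqOn_indicator.mono Ioi_subset_Ici_self
  have hae (u : ℝ → ℝ) : u =ᵐ[volume.restrict (Ioi 0)] (Ici 0).indicator u :=
    ae_restrict_of_forall_mem measurableSet_Ioi (hind u).symm
  have hlconv : lconv ((Ici 0).indicator f) ((Ici 0).indicator g) =ᵐ[volume.restrict (Ioi 0)]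
      lconv f g := ae_restrict_of_forall_mem measurableSet_Ioi fun t ht =>
    lconv_congr (le_of_lt ht) ((hind f).mono Ioo_subset_Ioi_self)
      ((hind g).mono Ioo_subset_Ioi_self)
  exact (ae_eq_zero_or_ae_eq_zero_of_lconv_ae_eq_zero (hint hf) (hint hg) (hlconv.trans h)).imp
    (hae f).trans (hae g).trans

/-- The ring `(C_{-1}(0,∞), +, *)` with Laplace-convolution multiplication has no
divisors of zero. -/
theorem CMinusOne_no_zero_divisors (f g : ℝ → ℝ) (hf : CMinusOne f) (hg : CMinusOne g)
    (h : ∀ t > (0:ℝ), lconv f g t = 0) :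
    (∀ t > (0:ℝ), f t = 0) ∨ (∀ t > (0:ℝ), g t = 0) :=
  (CMinusOne_no_zero_divisors_general f g hf.locallyIntegrableOn hg.locallyIntegrableOn
    (ae_restrict_of_forall_mem measurableSet_Ioi h)).imp
    (fun hf0 => Measure.eqOn_open_of_ae_eq hf0 isOpen_Ioi hf.continuousOn continuousOn_const)
    fun hg0 => Measure.eqOn_open_of_ae_eq hg0 isOpen_Ioi hg.continuousOn continuousOn_const
end
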